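/- Let σ, χ, λ be cardinals with cf(χ) < σ = cf(σ) < χ < λ. Then cov(λ, χ⁺, χ⁺, σ) = cov(λ, χ, χ⁺, σ) = cov(λ, χ, χ, σ) = cov(λ, χ⁺, χ, σ). -/

import Mathlib

open Cardinal Set

universe u

/-- `X ⊆ 𝒫_{ρ₂}(ρ₁)` is a family witnessing the covering number `cov (ρ₁, ρ₂, ρ₃, ρ₄)`:
every `b ∈ 𝒫_{ρ₃}(ρ₁)` is covered by the union of fewer than `ρ₄` members of `X`. -/
def IsCovFamily (ρ₁ ρ₂ ρ₃ ρ₄ : Cardinal.{u}) (X : Set (Set ρ₁.out)) : Prop :=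
  (∀ x ∈ X, #x < ρ₂) ∧
    ∀ b : Set ρ₁.out, #b < ρ₃ →
      ∃ Q : Set (Set ρ₁.out), Q ⊆ X ∧ #Q < ρ₄ ∧ b ⊆ ⋃₀ Q

open scoped Classical in
/-- The covering number `cov (ρ₁, ρ₂, ρ₃, ρ₄)`: the least cardinality of a set
`X ⊆ 𝒫_{ρ₂}(ρ₁)` such that every `b ∈ 𝒫_{ρ₃}(ρ₁)` is included in the union of
fewer than `ρ₄` members of `X` (with value `2 ^ ρ₁` if no such family exists). -/
noncomputable def cov (ρ₁ ρ₂ ρ₃ ρ₄ : Cardinal.{u}) : Cardinal.{u} :=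
  if ∃ X, IsCovFamily ρ₁ ρ₂ ρ₃ ρ₄ X then
    sInf {κ | ∃ X, IsCovFamily ρ₁ ρ₂ ρ₃ ρ₄ X ∧ #X = κ}
  else 2 ^ ρ₁

/-- `χ` is a `λ`-revision cardinal: `cov (λ, χ, χ, σ) ≤ λ` for some cardinal `σ < χ`. -/
def IsRevision (χ lam : Cardinal.{u}) : Prop :=
  ∃ σ < χ, cov lam χ χ σ ≤ lam

/-- `c` is a limit cardinal: infinite and not the successor of any cardinal. -/
def IsLimitCard (c : Cardinal.{u}) : Prop :=
  ℵ₀ ≤ c ∧ ∀ μ : Cardinal.{u}, c ≠ Order.succ μ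

/-- `Z ⊆ 𝒫_τ(λ)` is a family witnessing `equal (λ, τ, ρ, σ)`: every `b ∈ [λ]^ρ` is
the union of fewer than `σ` members of `Z`. -/
def IsEqualFamily (lam tau rho sigma : Cardinal.{u}) (Z : Set (Set lam.out)) : Prop :=
  (∀ z ∈ Z, #z < tau) ∧
    ∀ b : Set lam.out, #b = rho →
      ∃ e : Set (Set lam.out), e ⊆ Z ∧ #e < sigma ∧ b = ⋃₀ e

open scoped Classical in
/-- `equal (λ, τ, ρ, σ)`: the least cardinality of a set `Z ⊆ 𝒫_τ(λ)` such that every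
`b ∈ [λ]^ρ` is the union of fewer than `σ` members of `Z`; `2 ^ λ` if no such `Z` exists. -/
noncomputable def equalCov (lam tau rho sigma : Cardinal.{u}) : Cardinal.{u} :=
  if ∃ Z, IsEqualFamily lam tau rho sigma Z then
    sInf {κ | ∃ Z, IsEqualFamily lam tau rho sigma Z ∧ #Z = κ}
  else 2 ^ lam

/-- `Z ⊆ 𝒫_τ(λ)` is a family witnessing `equal (λ, τ, <ρ, σ)`: every `b ∈ 𝒫_ρ(λ)` is
the union of fewer than `σ` members of `Z`. -/
def IsEqualLtFamily (lam tau rho sigma : Cardinal.{u}) (Z : Set (Set lam.out)) : Prop :=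
  (∀ z ∈ Z, #z < tau) ∧
    ∀ b : Set lam.out, #b < rho →
      ∃ e : Set (Set lam.out), e ⊆ Z ∧ #e < sigma ∧ b = ⋃₀ e

open scoped Classical in
/-- `equal (λ, τ, <ρ, σ)`: the least cardinality of a set `Z ⊆ 𝒫_τ(λ)` such that every
`b ∈ 𝒫_ρ(λ)` is the union of fewer than `σ` members of `Z`; `2 ^ λ` if no such `Z` exists. -/
noncomputable def equalLtCov (lam tau rho sigma : Cardinal.{u}) : Cardinal.{u} :=
  if ∃ Z, IsEqualLtFamily lam tau rho sigma Z then
    sInf {κ | ∃ Z, IsEqualLtFamily lam tau rho sigma Z ∧ #Z = κ}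
  else 2 ^ lam

/-!
The key fact is that a set of size at most `χ` is a union of at most `cf χ < σ` sets of size less
than `χ`.

Applied to the sets to be covered, it shows that a family covering the sets of size less than `χ`
already covers those of size at most `χ`: each piece needs fewer than `σ` members of the family, and
`σ` is regular. So the third argument of `cov` may be changed between `χ` and `χ⁺`.

Applied to the members of a family `X`, it turns a family of sets of size at most `χ` into one of
sets of size less than `χ`, again by regularity of `σ`. The new family has at most `|X| · cf χ`
members, which is at most `|X|`: covering `λ` by sets of size at most `χ < λ` takes at least `λ`
of them. So the second argument of `cov` may be changed between `χ` and `χ⁺`.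
-/

theorem IsCovFamily.cov_le_mk {ρ₁ ρ₂ ρ₃ ρ₄ : Cardinal.{u}} {X : Set (Set ρ₁.out)}
    (hX : IsCovFamily ρ₁ ρ₂ ρ₃ ρ₄ X) : cov ρ₁ ρ₂ ρ₃ ρ₄ ≤ #X := by
  rw [cov, if_pos ⟨X, hX⟩]
  exact csInf_le' ⟨X, hX, rfl⟩

theorem exists_isCovFamily_mk_eq_cov {ρ₁ ρ₂ ρ₃ ρ₄ : Cardinal.{u}}
    (h : ∃ X, IsCovFamily ρ₁ ρ₂ ρ₃ ρ₄ X) :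
    ∃ X, IsCovFamily ρ₁ ρ₂ ρ₃ ρ₄ X ∧ #X = cov ρ₁ ρ₂ ρ₃ ρ₄ := by
  rw [cov, if_pos h]
  obtain ⟨X, hX⟩ := h
  exact csInf_mem (s := {κ | ∃ X, IsCovFamily ρ₁ ρ₂ ρ₃ ρ₄ X ∧ #X = κ}) ⟨#X, X, hX, rfl⟩

theorem cov_eq_cov_of_forall_exists {ρ₁ ρ₂ ρ₃ ρ₄ ρ₂' ρ₃' ρ₄' : Cardinal.{u}}
    (h : ∀ X, IsCovFamily ρ₁ ρ₂ ρ₃ ρ₄ X → ∃ Y, IsCovFamily ρ₁ ρ₂' ρ₃' ρ₄' Y ∧ #Y ≤ #X)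
    (h' : ∀ Y, IsCovFamily ρ₁ ρ₂' ρ₃' ρ₄' Y → ∃ X, IsCovFamily ρ₁ ρ₂ ρ₃ ρ₄ X ∧ #X ≤ #Y) :
    cov ρ₁ ρ₂ ρ₃ ρ₄ = cov ρ₁ ρ₂' ρ₃' ρ₄' := by
  by_cases hex : ∃ X, IsCovFamily ρ₁ ρ₂ ρ₃ ρ₄ X
  · obtain ⟨X, hX, hXcov⟩ := exists_isCovFamily_mk_eq_cov hex
    obtain ⟨Y, hY, hYX⟩ := h X hX
    obtain ⟨Z, hZ, hZcov⟩ := exists_isCovFamily_mk_eq_cov ⟨Y, hY⟩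
    obtain ⟨W, hW, hWZ⟩ := h' Z hZ
    exact ((hW.cov_le_mk.trans hWZ).trans_eq hZcov).antisymm
      ((hY.cov_le_mk.trans hYX).trans_eq hXcov)
  · have hex' : ¬ ∃ Y, IsCovFamily ρ₁ ρ₂' ρ₃' ρ₄' Y := fun ⟨Y, hY⟩ =>
      hex ((h' Y hY).imp fun _ => And.left)
    rw [cov, cov, if_neg hex, if_neg hex']

theorem IsCovFamily.mono {ρ₁ ρ₂ ρ₂' ρ₃ ρ₃' ρ₄ : Cardinal.{u}} {X : Set (Set ρ₁.out)}
    (hX : IsCovFamily ρ₁ ρ₂ ρ₃ ρ₄ X) (h₂ : ρ₂ ≤ ρ₂') (h₃ : ρ₃' ≤ ρ₃) :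
    IsCovFamily ρ₁ ρ₂' ρ₃' ρ₄ X :=
  ⟨fun x hx => (hX.1 x hx).trans_le h₂, fun b hb => hX.2 b (hb.trans_le h₃)⟩

theorem IsCovFamily.sUnion_eq_univ {ρ₁ ρ₂ ρ₃ ρ₄ : Cardinal.{u}} {X : Set (Set ρ₁.out)}
    (hX : IsCovFamily ρ₁ ρ₂ ρ₃ ρ₄ X) (h₃ : 1 < ρ₃) : ⋃₀ X = Set.univ := by
  refine eq_univ_of_forall fun a => ?_
  obtain ⟨Q, hQX, -, haQ⟩ := hX.2 {a} (by rwa [mk_singleton])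
  exact sUnion_mono hQX (haQ rfl)

theorem IsCovFamily.biUnion_of_subset_sUnion {ρ₁ ρ₂ ρ₂' ρ₃ ρ₄ : Cardinal.{u}}
    {X : Set (Set ρ₁.out)} {F : Set ρ₁.out → Set (Set ρ₁.out)}
    (hX : IsCovFamily ρ₁ ρ₂ ρ₃ ρ₄ X) (h₄ : ρ₄.IsRegular)
    (hF : ∀ x ∈ X, #(F x) < ρ₄) (hlt : ∀ x ∈ X, ∀ y ∈ F x, #y < ρ₂')
    (hcover : ∀ x ∈ X, x ⊆ ⋃₀ F x) : IsCovFamily ρ₁ ρ₂' ρ₃ ρ₄ (⋃ x ∈ X, F x) := by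
  refine ⟨fun y hy => ?_, fun b hb => ?_⟩
  · obtain ⟨x, hx, hyx⟩ := mem_iUnion₂.1 hy
    exact hlt x hx y hyx
  · obtain ⟨Q, hQX, hQ, hbQ⟩ := hX.2 b hb
    refine ⟨⋃ x ∈ Q, F x, biUnion_subset_biUnion_left hQX,
      (card_biUnion_lt_iff_forall_of_isRegular h₄ hQ).2 fun x hx => hF x (hQX hx), ?_⟩
    intro a ha
    obtain ⟨x, hx, hax⟩ := hbQ ha
    obtain ⟨y, hy, hay⟩ := hcover x (hQX hx) hax
    exact ⟨y, mem_biUnion hx hy, hay⟩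

theorem exists_sUnion_eq_univ_of_aleph0_le {χ : Cardinal.{u}} (hχ : ℵ₀ ≤ χ) :
    ∃ F : Set (Set χ.ord.ToType), #F ≤ χ.ord.cof ∧ (∀ y ∈ F, #y < χ) ∧ ⋃₀ F = Set.univ := by
  obtain ⟨S, hS, hScof⟩ := Order.exists_cof_eq χ.ord.ToType
  have := noMaxOrder hχ
  refine ⟨Iio '' S, ?_, ?_, ?_⟩
  · exact mk_image_le.trans_eq (hScof.trans (Ordinal.cof_toType _))
  · rintro _ ⟨s, -, rfl⟩
    simpa using mk_Iio_lt s (by simp)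
  · rwa [sUnion_image, ← isCofinal_iff_iUnion_Iio_eq_univ]

theorem exists_sUnion_eq_of_mk_le {α : Type u} {χ : Cardinal.{u}} (hχ : ℵ₀ ≤ χ) (x : Set α)
    (hx : #x ≤ χ) :
    ∃ F : Set (Set α), #F ≤ χ.ord.cof ∧ (∀ y ∈ F, #y < χ) ∧ ⋃₀ F = x := by
  obtain ⟨F, hF, hlt, hcover⟩ := exists_sUnion_eq_univ_of_aleph0_le hχ
  obtain ⟨e⟩ : #x ≤ #χ.ord.ToType := by rwa [mk_ord_toType]
  refine ⟨(fun y => Subtype.val '' (e ⁻¹' y)) '' F, mk_image_le.trans hF, ?_, ?_⟩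
  · rintro _ ⟨y, hy, rfl⟩
    exact (mk_image_le.trans (mk_preimage_of_injective e y e.injective)).trans_lt (hlt y hy)
  · rw [sUnion_image, ← image_iUnion₂, ← preimage_iUnion₂, ← sUnion_eq_biUnion, hcover,
      preimage_univ, image_univ, Subtype.range_coe]

theorem mk_le_mk_of_sUnion_eq_univ {α : Type u} {χ : Cardinal.{u}} {X : Set (Set α)}
    (hα : ℵ₀ ≤ #α) (hχ : χ < #α) (hX : ∀ x ∈ X, #x ≤ χ) (hcover : ⋃₀ X = Set.univ) :
    #α ≤ #X := by
  by_contra! hlt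
  have hle : #α ≤ #X * χ :=
    calc #α = #(⋃₀ X) := by rw [hcover, mk_univ]
      _ ≤ #X * ⨆ x : X, #(x : Set α) := mk_sUnion_le X
      _ ≤ #X * χ := mul_le_mul_right (ciSup_le' fun x : X => hX x x.2) _
  exact hle.not_gt (mul_lt_of_lt hα hlt hχ)

section SmallCofinality

variable {σ χ lam ρ₂ ρ₃ : Cardinal.{u}}

theorem IsCovFamily.succ_right_of_cof_lt (hσ : σ.IsRegular) (hχ : ℵ₀ ≤ χ) (hcof : χ.ord.cof < σ)
    {X : Set (Set lam.out)} (hX : IsCovFamily lam ρ₂ χ σ X) :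
    IsCovFamily lam ρ₂ (Order.succ χ) σ X := by
  refine ⟨hX.1, fun b hb => ?_⟩
  obtain ⟨F, hF, hlt, rfl⟩ := exists_sUnion_eq_of_mk_le hχ b (Order.lt_succ_iff.1 hb)
  choose! Q hQX hQ hcover using hX.2
  refine ⟨⋃ y ∈ F, Q y, iUnion₂_subset fun y hy => hQX y (hlt y hy),
    (card_biUnion_lt_iff_forall_of_isRegular hσ (hF.trans_lt hcof)).2
      fun y hy => hQ y (hlt y hy), ?_⟩
  exact sUnion_subset fun y hy =>
    (hcover y (hlt y hy)).trans (sUnion_mono (subset_biUnion_of_mem hy))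

theorem cov_succ_right_eq_of_cof_lt (hσ : σ.IsRegular) (hχ : ℵ₀ ≤ χ) (hcof : χ.ord.cof < σ) :
    cov lam ρ₂ (Order.succ χ) σ = cov lam ρ₂ χ σ :=
  cov_eq_cov_of_forall_exists (fun X hX => ⟨X, hX.mono le_rfl (Order.le_succ χ), le_rfl⟩)
    fun X hX => ⟨X, hX.succ_right_of_cof_lt hσ hχ hcof, le_rfl⟩

theorem IsCovFamily.exists_mk_le_of_succ_left (hσ : σ.IsRegular) (hχ : ℵ₀ ≤ χ)
    (hcof : χ.ord.cof < σ) (hlam : χ < lam) (h₃ : 1 < ρ₃) {X : Set (Set lam.out)}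
    (hX : IsCovFamily lam (Order.succ χ) ρ₃ σ X) :
    ∃ Y, IsCovFamily lam χ ρ₃ σ Y ∧ #Y ≤ #X := by
  have hXχ : ∀ x ∈ X, #x ≤ χ := fun x hx => Order.lt_succ_iff.1 (hX.1 x hx)
  choose! F hF hlt hsUnion using fun x : Set lam.out => exists_sUnion_eq_of_mk_le hχ x
  refine ⟨⋃ x ∈ X, F x, hX.biUnion_of_subset_sUnion hσ
    (fun x hx => (hF x (hXχ x hx)).trans_lt hcof)
    (fun x hx => hlt x (hXχ x hx)) (fun x hx => (hsUnion x (hXχ x hx)).ge), ?_⟩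
  have hlamX : lam ≤ #X := by
    simpa using mk_le_mk_of_sUnion_eq_univ (by simpa using hχ.trans hlam.le) (by simpa using hlam)
      hXχ (hX.sUnion_eq_univ h₃)
  have hFX : ∀ x ∈ X, #(F x) ≤ #X := fun x hx =>
    calc #(F x) ≤ χ.ord.cof := hF x (hXχ x hx)
      _ ≤ χ := Ordinal.cof_ord_le χ
      _ ≤ #X := hlam.le.trans hlamX
  calc #(⋃ x ∈ X, F x) ≤ #X * ⨆ x : X, #(F x) := mk_biUnion_le _ _
    _ ≤ #X * #X := mul_le_mul_right (ciSup_le' fun x : X => hFX x x.2) _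
    _ = #X := mul_eq_self (hχ.trans (hlam.le.trans hlamX))

theorem cov_succ_left_eq_of_cof_lt (hσ : σ.IsRegular) (hχ : ℵ₀ ≤ χ) (hcof : χ.ord.cof < σ)
    (hlam : χ < lam) (h₃ : 1 < ρ₃) :
    cov lam (Order.succ χ) ρ₃ σ = cov lam χ ρ₃ σ :=
  cov_eq_cov_of_forall_exists (fun _ hX => hX.exists_mk_le_of_succ_left hσ hχ hcof hlam h₃)
    fun Y hY => ⟨Y, hY.mono (Order.le_succ χ) le_rfl, le_rfl⟩

end SmallCofinality

theorem isRegular_of_cof_ord_eq {σ : Cardinal.{u}} (hσ : σ.ord.cof = σ) (h : 1 < σ) :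
    σ.IsRegular :=
  ⟨hσ ▸ Ordinal.aleph0_le_cof_iff.2 (hσ.symm ▸ h), hσ.ge⟩

theorem one_lt_of_cof_ord_lt {σ χ : Cardinal.{u}} (hχ : 0 < χ) (hcof : χ.ord.cof < σ) : 1 < σ :=
  (Cardinal.one_le_iff_pos.2 (Ordinal.cof_pos.2 (ord_pos.2 hχ))).trans_lt hcof

theorem stmt11_general {σ χ lam : Cardinal.{u}} (hσ : σ.IsRegular) (hχ : ℵ₀ ≤ χ)
    (hcof : χ.ord.cof < σ) (hlam : χ < lam) :
    cov lam (Order.succ χ) (Order.succ χ) σ = cov lam χ (Order.succ χ) σ ∧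
      cov lam χ (Order.succ χ) σ = cov lam χ χ σ ∧
      cov lam χ χ σ = cov lam (Order.succ χ) χ σ := by
  have hone : 1 < χ := one_lt_aleph0.trans_le hχ
  exact ⟨cov_succ_left_eq_of_cof_lt hσ hχ hcof hlam (hone.trans (Order.lt_succ χ)),
    cov_succ_right_eq_of_cof_lt hσ hχ hcof,
    (cov_succ_left_eq_of_cof_lt hσ hχ hcof hlam hone).symm⟩

/-- Let `σ, χ, λ` be cardinals with `cf χ < σ = cf σ < χ < λ`. Then
`cov (λ, χ⁺, χ⁺, σ) = cov (λ, χ, χ⁺, σ) = cov (λ, χ, χ, σ) = cov (λ, χ⁺, χ, σ)`. -/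
theorem stmt11 (σ χ lam : Cardinal.{u}) (h1 : χ.ord.cof < σ) (h2 : σ.ord.cof = σ)
    (h3 : σ < χ) (h4 : χ < lam) :
    cov lam (Order.succ χ) (Order.succ χ) σ = cov lam χ (Order.succ χ) σ ∧
      cov lam χ (Order.succ χ) σ = cov lam χ χ σ ∧
      cov lam χ χ σ = cov lam (Order.succ χ) χ σ := by
  have hσ : σ.IsRegular := isRegular_of_cof_ord_eq h2 (one_lt_of_cof_ord_lt h3.pos h1)
  exact stmt11_general hσ (hσ.aleph0_le.trans h3.le) h1 h4
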